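/- arXiv:1008.0940 — 2 statements merged into one kernel-verified Lean document; each statement's English description precedes it below -/
import Mathlib

section
/- Let μ be a probability measure on (0,∞) with distribution function F such that L(t) := 1 − F(t) is positive for all t and slowly varying at infinity. Fix 0 < a < b < ∞, let (λ_i)_{i≥1} be any sequence in [a,b], and let μ_i be the pushforward of μ under x ↦ x/λ_i. Then the scaled renewal function U_Λ(t) = 1 + Σ_{n=1}^∞ (μ_1 * μ_2 * ⋯ * μ_n)([0,t]) is finite for every t, and U_Λ(t)·(1 − F(t)) → 1 as t → ∞. -/
open MeasureTheory ProbabilityTheory Filter Set Topology ENNReal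

/-- Partial convolutions `μ_1 * μ_2 * ⋯ * μ_n` of a sequence of measures,
with the empty product `δ_0`. -/
noncomputable def partialConv (μs : ℕ → MeasureTheory.Measure ℝ) :
    ℕ → MeasureTheory.Measure ℝ
  | 0 => MeasureTheory.Measure.dirac 0
  | n + 1 => MeasureTheory.Measure.conv (partialConv μs n) (μs (n + 1))

lemma pc_finite (μs : ℕ → Measure ℝ) [∀ i, IsFiniteMeasure (μs i)] (n : ℕ) :
    IsFiniteMeasure (partialConv μs n) := by
  induction n with
  | zero => rw [partialConv]; infer_instance
  | succ n ih => rw [partialConv]; infer_instance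

lemma conv_apply' (μ ν : Measure ℝ) {s : Set ℝ} (hs : MeasurableSet s) :
    Measure.conv μ ν s = μ.prod ν ((fun x : ℝ × ℝ => x.1 + x.2) ⁻¹' s) := by
  unfold Measure.conv
  rw [Measure.map_apply (by fun_prop) hs]

lemma pc_neg (μs : ℕ → Measure ℝ) [∀ i, IsFiniteMeasure (μs i)]
    (h0 : ∀ i, μs i (Iio 0) = 0) (n : ℕ) : partialConv μs n (Iio 0) = 0 := by
  induction n with
  | zero => rw [partialConv]; simp
  | succ n ih =>
    have := pc_finite μs n
    rw [partialConv, conv_apply' _ _ measurableSet_Iio]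
    refine measure_mono_null (t := (Iio 0 ×ˢ univ) ∪ (univ ×ˢ Iio 0)) ?_ ?_
    · rintro ⟨x, y⟩ h
      simp only [mem_preimage, mem_Iio, mem_union, mem_prod, mem_univ] at *
      by_contra! hc
      have h1 := hc.1
      have h2 := hc.2
      simp at h1 h2
      linarith
    · rw [measure_union_null_iff]
      simp [Measure.prod_prod, ih, h0]

lemma pc_upper (μs : ℕ → Measure ℝ) [∀ i, IsFiniteMeasure (μs i)]
    (h0 : ∀ i, μs i (Iio 0) = 0) (t : ℝ) (p : ℝ≥0∞) (hp : ∀ i, μs i (Iic t) ≤ p) (n : ℕ) :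
    partialConv μs n (Icc 0 t) ≤ p ^ n := by
  induction n with
  | zero => rw [partialConv, pow_zero]; exact prob_le_one
  | succ n ih =>
    have := pc_finite μs n
    rw [partialConv, conv_apply' _ _ measurableSet_Icc]
    calc _ ≤ (partialConv μs n).prod (μs (n+1))
          ((Icc 0 t ×ˢ Iic t) ∪ ((Iio 0 ×ˢ univ) ∪ (univ ×ˢ Iio 0))) := by
          apply measure_mono
          rintro ⟨x, y⟩ h
          simp only [mem_preimage, mem_Icc, mem_union, mem_prod, mem_univ, mem_Iio, mem_Iic,
            and_true, true_and] at *
          rcases lt_or_ge x 0 with hx | hx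
          · exact Or.inr (Or.inl hx)
          rcases lt_or_ge y 0 with hy | hy
          · exact Or.inr (Or.inr hy)
          exact Or.inl ⟨⟨hx, by linarith⟩, by linarith⟩
      _ ≤ (partialConv μs n).prod (μs (n+1)) (Icc 0 t ×ˢ Iic t) +
          (partialConv μs n).prod (μs (n+1)) ((Iio 0 ×ˢ univ) ∪ (univ ×ˢ Iio 0)) :=
          measure_union_le _ _
      _ = partialConv μs n (Icc 0 t) * μs (n+1) (Iic t) := by
          rw [measure_union_null_iff.2]
          · simp [Measure.prod_prod]
          · simp [Measure.prod_prod, pc_neg μs h0 n, h0]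
      _ ≤ p ^ n * p := mul_le_mul' ih (hp _)
      _ = p ^ (n+1) := (pow_succ _ _).symm

lemma pc_mono (μs νs : ℕ → Measure ℝ) [∀ i, IsFiniteMeasure (μs i)] [∀ i, IsFiniteMeasure (νs i)]
    (h : ∀ i, νs i ≤ μs i) (n : ℕ) : partialConv νs n ≤ partialConv μs n := by
  induction n with
  | zero => rw [partialConv, partialConv]
  | succ n ih =>
    rw [partialConv, partialConv]
    unfold Measure.conv
    exact Measure.map_mono (Measure.prod_mono ih (h _)) (by fun_prop)

lemma conv_univ' (μ ν : Measure ℝ) [IsFiniteMeasure μ] [IsFiniteMeasure ν] :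
    Measure.conv μ ν univ = μ univ * ν univ := by
  rw [conv_apply' _ _ MeasurableSet.univ, preimage_univ, ← univ_prod_univ, Measure.prod_prod]

lemma pc_univ_le (νs : ℕ → Measure ℝ) [∀ i, IsFiniteMeasure (νs i)]
    (p : ℝ≥0∞) (hp : ∀ i, νs i univ ≤ p) (n : ℕ) : partialConv νs n univ ≤ p ^ n := by
  induction n with
  | zero => rw [partialConv]; simp
  | succ n ih =>
    have := pc_finite νs n
    rw [partialConv, conv_univ', pow_succ]
    exact mul_le_mul' ih (hp _)

lemma pc_le_univ (νs : ℕ → Measure ℝ) [∀ i, IsFiniteMeasure (νs i)]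
    (p : ℝ≥0∞) (hp : ∀ i, p ≤ νs i univ) (n : ℕ) : p ^ n ≤ partialConv νs n univ := by
  induction n with
  | zero => rw [partialConv]; simp
  | succ n ih =>
    have := pc_finite νs n
    rw [partialConv, conv_univ', pow_succ]
    exact mul_le_mul' ih (hp _)

lemma pc_moment (νs : ℕ → Measure ℝ) [∀ i, IsFiniteMeasure (νs i)]
    (p m : ℝ≥0∞) (hp : ∀ i, νs i univ ≤ p)
    (hm : ∀ i, ∫⁻ x, ENNReal.ofReal x ∂(νs i) ≤ m) (n : ℕ) :
    ∫⁻ x, ENNReal.ofReal x ∂(partialConv νs (n+1)) ≤ (n+1 : ℕ) * p ^ n * m := by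
  have step : ∀ n, ∫⁻ x, ENNReal.ofReal x ∂(partialConv νs (n+1)) ≤
      (∫⁻ x, ENNReal.ofReal x ∂(partialConv νs n)) * p + p ^ n * m := by
    intro n
    have := pc_finite νs n
    rw [partialConv, Measure.lintegral_conv (by fun_prop)]
    calc _ ≤ ∫⁻ x, ∫⁻ y, (ENNReal.ofReal x + ENNReal.ofReal y) ∂(νs (n+1)) ∂(partialConv νs n) :=
          lintegral_mono fun x => lintegral_mono fun y => ENNReal.ofReal_add_le
      _ = ∫⁻ x, (ENNReal.ofReal x * νs (n+1) univ + ∫⁻ y, ENNReal.ofReal y ∂(νs (n+1)))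
            ∂(partialConv νs n) := by
          congr 1; ext x
          rw [lintegral_add_left (by fun_prop), lintegral_const]
      _ = (∫⁻ x, ENNReal.ofReal x ∂(partialConv νs n)) * νs (n+1) univ +
            (∫⁻ y, ENNReal.ofReal y ∂(νs (n+1))) * partialConv νs n univ := by
          rw [lintegral_add_right _ (by fun_prop), lintegral_const,
            lintegral_mul_const _ (by fun_prop)]
      _ ≤ _ := by
          rw [mul_comm (∫⁻ y, ENNReal.ofReal y ∂(νs (n+1)))]
          exact add_le_add (mul_le_mul' le_rfl (hp _))
            (mul_le_mul' (pc_univ_le νs p hp n) (hm _))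
  induction n with
  | zero =>
    refine (step 0).trans ?_
    rw [partialConv]; simp
  | succ n ih =>
    refine (step (n+1)).trans ?_
    calc _ ≤ ((n+1 : ℕ) * p ^ n * m) * p + p ^ (n+1) * m := by gcongr
      _ = _ := by push_cast; ring

/-- Lower bound for one partial convolution through truncation at level `c`. -/
lemma pc_lower (μs : ℕ → Measure ℝ) [∀ i, IsFiniteMeasure (μs i)]
    (h0 : ∀ i, μs i (Iio 0) = 0) (c t : ℝ) (ht : 0 < t) (q p m : ℝ≥0∞)
    (hq : ∀ i, q ≤ μs i (Iic c)) (hp : ∀ i, μs i (Iic c) ≤ p)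
    (hm : ∀ i, ∫⁻ x in Iic c, ENNReal.ofReal x ∂(μs i) ≤ m) (n : ℕ) :
    q ^ (n+1) ≤ partialConv μs (n+1) (Icc 0 t) + (n+1 : ℕ) * p ^ n * m / ENNReal.ofReal t := by
  set νs : ℕ → Measure ℝ := fun i => (μs i).restrict (Iic c) with hν
  have hle : ∀ i, νs i ≤ μs i := fun i => Measure.restrict_le_self
  have hu : ∀ i, νs i univ = μs i (Iic c) := fun i => by simp [hν]
  have h1 := pc_le_univ νs q (fun i => by rw [hu]; exact hq i) (n+1)
  have h2 := pc_moment νs p m (fun i => by rw [hu]; exact hp i) hm n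
  have h3 : partialConv νs (n+1) {x | ENNReal.ofReal t ≤ ENNReal.ofReal x} ≤
      (∫⁻ x, ENNReal.ofReal x ∂(partialConv νs (n+1))) / ENNReal.ofReal t :=
    meas_ge_le_lintegral_div (by fun_prop) (by simpa using ht) (by simp)
  have h4 : partialConv νs (n+1) (Iio 0) = 0 :=
    pc_neg νs (fun i => le_antisymm ((hle i _).trans (h0 i).le) bot_le) _
  calc q ^ (n+1) ≤ partialConv νs (n+1) univ := h1
    _ ≤ partialConv νs (n+1) (Icc 0 t ∪ ({x | ENNReal.ofReal t ≤ ENNReal.ofReal x} ∪ Iio 0)) := by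
        apply measure_mono
        intro x _
        simp only [mem_union, mem_Icc, mem_setOf_eq, mem_Iio]
        rcases lt_or_ge x 0 with hx | hx
        · exact Or.inr (Or.inr hx)
        rcases le_or_gt x t with hy | hy
        · exact Or.inl ⟨hx, hy⟩
        · exact Or.inr (Or.inl (ENNReal.ofReal_le_ofReal hy.le))
    _ ≤ partialConv νs (n+1) (Icc 0 t) +
        (partialConv νs (n+1) {x | ENNReal.ofReal t ≤ ENNReal.ofReal x}
          + partialConv νs (n+1) (Iio 0)) :=
        (measure_union_le _ _).trans (add_le_add le_rfl (measure_union_le _ _))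
    _ ≤ _ := by
        rw [h4, add_zero]
        refine add_le_add (pc_mono μs νs hle (n+1) _) (h3.trans ?_)
        exact ENNReal.div_le_div_right h2 _

/-- Truncated first moment bound for slowly varying tails. -/
lemma moment_bound (M L : ℝ → ℝ) (hL : ∀ t, 0 < L t) (hanti : Antitone L)
    (hM0 : ∀ T, 0 ≤ T → M T ≤ T)
    (hM : ∀ T, 0 ≤ T → M T ≤ M (T/2) + T * L (T/2))
    (hslow : Tendsto (fun t => L (1/2 * t) / L t) atTop (𝓝 1)) :
    ∃ C T0 : ℝ, 0 < C ∧ 0 < T0 ∧ ∀ T, T0 ≤ T → M T ≤ C * T * L T := by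
  have h1 : ∀ᶠ t in atTop, L (1/2 * t) / L t < 4/3 :=
    hslow.eventually (gt_mem_nhds (by norm_num))
  obtain ⟨T1, hT1⟩ := eventually_atTop.1 h1
  set T0 := max T1 1
  have hT0 : 1 ≤ T0 := le_max_right _ _
  set C := max 4 (1 / L (2*T0))
  have hC4 : 4 ≤ C := le_max_left _ _
  have hC1 : 1 ≤ C * L (2*T0) := by
    have : 1 / L (2*T0) ≤ C := le_max_right _ _
    rwa [div_le_iff₀ (hL _)] at this
  refine ⟨C, T0, by linarith, by linarith, ?_⟩
  have key : ∀ n : ℕ, ∀ T, T0 ≤ T → T ≤ 2^(n+1) * T0 → M T ≤ C * T * L T := by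
    intro n
    induction n with
    | zero =>
      intro T h h'
      have hT : T ≤ 2 * T0 := by simpa using h'
      have := hanti hT
      have h3 : 1 ≤ C * L T := hC1.trans (mul_le_mul_of_nonneg_left this (by linarith))
      have := hM0 T (by linarith)
      nlinarith
    | succ n ih =>
      intro T h h'
      rcases le_or_gt T (2 * T0) with hT | hT
      · have := hanti hT
        have h3 : 1 ≤ C * L T := hC1.trans (mul_le_mul_of_nonneg_left this (by linarith))
        have := hM0 T (by linarith)
        nlinarith
      · have e := ih (T/2) (by linarith) (by rw [pow_succ] at h'; linarith)
        have f := hM T (by linarith)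
        have g := hT1 T ((le_max_left _ _).trans h)
        rw [div_lt_iff₀ (hL _), show 1/2*T = T/2 by ring] at g
        have hTp : 0 < T := by linarith
        calc M T ≤ T * (C/2+1) * L (T/2) := by nlinarith
          _ ≤ T * (C/2+1) * (4/3 * L T) := by gcongr
          _ = (2/3*C + 4/3) * (T * L T) := by ring
          _ ≤ C * (T * L T) := by
            apply mul_le_mul_of_nonneg_right (by linarith)
            have := hL T
            positivity
          _ = _ := by ring
  intro T hT
  obtain ⟨n, hn⟩ := pow_unbounded_of_one_lt T (one_lt_two (α := ℝ))
  refine key n T hT ?_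
  have : (0:ℝ) < 2^n := by positivity
  rw [pow_succ]
  nlinarith

lemma hasSum_succ_geo (p : ℝ) (h0 : 0 ≤ p) (h1 : p < 1) :
    HasSum (fun n : ℕ => ((n+1 : ℕ) : ℝ) * p ^ n) (1 / (1-p)^2) := by
  have a := (hasSum_coe_mul_geometric_of_norm_lt_one (r := p)
    (by rwa [Real.norm_of_nonneg h0])).add (hasSum_geometric_of_lt_one h0 h1)
  have : 1 - p ≠ 0 := by linarith
  have e1 : (fun n : ℕ => ((n+1 : ℕ) : ℝ) * p ^ n) = fun n : ℕ => (n : ℝ) * p ^ n + p ^ n := by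
    funext n; push_cast; ring
  have e2 : 1 / (1-p)^2 = p / (1 - p) ^ 2 + (1 - p)⁻¹ := by
    field_simp; ring
  rw [e1, e2]
  exact a

/-- **Scaled renewal function for slowly varying tails.** If `μ` is a
probability measure on `(0,∞)` with positive slowly varying upper tail
`1 - F`, `(λ_i)` is any sequence in `[a,b] ⊆ (0,∞)` and `μ_i` is the
pushforward of `μ` under `x ↦ x/λ_i`, then
`U_Λ(t) = 1 + Σ_{n≥1} (μ_1 * ⋯ * μ_n)([0,t])` is finite and
`U_Λ(t)·(1 - F(t)) → 1` as `t → ∞`. -/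
theorem scaled_renewal_function_slowly_varying
    (μ : Measure ℝ) [IsProbabilityMeasure μ]
    (hsupp : μ (Set.Iic (0 : ℝ)) = 0)
    (F : ℝ → ℝ) (hF : ∀ t, F t = (μ (Set.Ioc (0 : ℝ) t)).toReal)
    (hFtail : ∀ t : ℝ, 0 < 1 - F t)
    (hFslow : ∀ c : ℝ, 0 < c →
      Tendsto (fun t : ℝ => (1 - F (c * t)) / (1 - F t)) atTop (𝓝 1))
    (a b : ℝ) (ha : 0 < a) (hab : a < b)
    (lam : ℕ → ℝ) (hlam : ∀ i, lam i ∈ Set.Icc a b)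
    (μs : ℕ → Measure ℝ)
    (hμs : ∀ i, μs i = Measure.map (fun x : ℝ => x / lam i) μ)
    (U : ℝ → ℝ≥0∞)
    (hU : ∀ t, U t = 1 + ∑' n : ℕ, partialConv μs (n + 1) (Set.Icc 0 t)) :
    (∀ t : ℝ, U t < ⊤) ∧
      Tendsto (fun t : ℝ => (U t).toReal * (1 - F t)) atTop (𝓝 1) := by
  have hIic : ∀ t, μ (Iic t) = ENNReal.ofReal (F t) := by
    intro t
    rw [hF, ENNReal.ofReal_toReal (measure_ne_top _ _)]
    apply le_antisymm
    · calc μ (Iic t) ≤ μ (Iic 0 ∪ Ioc 0 t) := by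
            apply measure_mono
            intro x hx
            rcases le_or_gt x 0 with h | h
            · exact Or.inl h
            · exact Or.inr ⟨h, hx⟩
        _ ≤ μ (Iic 0) + μ (Ioc 0 t) := measure_union_le _ _
        _ = _ := by rw [hsupp, zero_add]
    · exact measure_mono fun x hx => hx.2
  have hF0 : ∀ t, 0 ≤ F t := fun t => by rw [hF]; positivity
  have hF1 : ∀ t, F t < 1 := fun t => by linarith [hFtail t]
  have hFmono : Monotone F := by
    intro s t hst
    rw [hF, hF]
    exact ENNReal.toReal_mono (measure_ne_top _ _) (measure_mono (Ioc_subset_Ioc_right hst))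
  have hb : 0 < b := ha.trans hab
  have hlp : ∀ i, 0 < lam i := fun i => ha.trans_le (hlam i).1
  have hmeas : ∀ i, Measurable (fun x : ℝ => x / lam i) := fun i => by fun_prop
  have : ∀ i, IsFiniteMeasure (μs i) := fun i => by rw [hμs]; infer_instance
  have h0 : ∀ i, μs i (Iio 0) = 0 := by
    intro i
    rw [hμs, Measure.map_apply (hmeas i) measurableSet_Iio]
    refine measure_mono_null ?_ hsupp
    intro x hx
    simp only [mem_preimage, mem_Iio, mem_Iic] at *
    by_contra! h
    have := div_pos h (hlp i)
    linarith
  have hpre : ∀ i t, (fun x : ℝ => x / lam i) ⁻¹' (Iic t) = Iic (lam i * t) := by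
    intro i t
    ext x
    simp only [mem_preimage, mem_Iic]
    rw [div_le_iff₀ (hlp i), mul_comm]
  have hI : ∀ i t, μs i (Iic t) = ENNReal.ofReal (F (lam i * t)) := by
    intro i t
    rw [hμs, Measure.map_apply (hmeas i) measurableSet_Iic, hpre, hIic]
  have hIb : ∀ t, 0 ≤ t → ∀ i, μs i (Iic t) ≤ ENNReal.ofReal (F (b * t)) := by
    intro t ht i
    rw [hI]
    exact ENNReal.ofReal_le_ofReal (hFmono (mul_le_mul_of_nonneg_right (hlam i).2 ht))
  have hIa : ∀ t, 0 ≤ t → ∀ i, ENNReal.ofReal (F (a * t)) ≤ μs i (Iic t) := by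
    intro t ht i
    rw [hI]
    exact ENNReal.ofReal_le_ofReal (hFmono (mul_le_mul_of_nonneg_right (hlam i).1 ht))
  -- upper bound
  have hup : ∀ t, 0 ≤ t → ∀ n, partialConv μs n (Icc 0 t) ≤ ENNReal.ofReal (F (b*t) ^ n) := by
    intro t ht n
    rw [ENNReal.ofReal_pow (hF0 _)]
    exact pc_upper μs h0 t _ (hIb t ht) n
  set P : ℝ → ℕ → ℝ := fun t n => (partialConv μs (n+1) (Icc 0 t)).toReal with hP
  have hPup : ∀ t, 0 ≤ t → ∀ n, P t n ≤ F (b*t) ^ (n+1) := fun t ht n =>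
    ENNReal.toReal_le_of_le_ofReal (pow_nonneg (hF0 _) _) (hup t ht _)
  have hgeo : ∀ x, HasSum (fun n : ℕ => F x ^ (n+1)) (1 / (1 - F x) - 1) := by
    intro x
    have := (hasSum_geometric_of_lt_one (hF0 x) (hF1 x)).mul_left (F x)
    have h' := (hFtail x).ne'
    have e1 : (fun n : ℕ => F x ^ (n+1)) = fun n : ℕ => F x * F x ^ n := by
      funext n; ring
    have e2 : 1 / (1 - F x) - 1 = F x * (1 - F x)⁻¹ := by
      field_simp; ring
    rw [e1, e2]
    exact this
  have hPs : ∀ t, 0 ≤ t → Summable (P t) := fun t ht =>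
    Summable.of_nonneg_of_le (fun n => ENNReal.toReal_nonneg) (hPup t ht) (hgeo _).summable
  have hne : ∀ t n, partialConv μs n (Icc 0 t) ≠ ⊤ := fun t n => by
    have := pc_finite μs n
    exact measure_ne_top _ _
  have hUeq : ∀ t, 0 ≤ t → U t = ENNReal.ofReal (1 + ∑' n, P t n) := by
    intro t ht
    rw [hU, ENNReal.ofReal_add zero_le_one (tsum_nonneg fun n => ENNReal.toReal_nonneg),
      ENNReal.ofReal_tsum_of_nonneg (fun n => ENNReal.toReal_nonneg) (hPs t ht)]
    simp [hP, ENNReal.ofReal_toReal, hne]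
  have hUr : ∀ t, 0 ≤ t → (U t).toReal = 1 + ∑' n, P t n := by
    intro t ht
    rw [hUeq t ht, ENNReal.toReal_ofReal]
    have : 0 ≤ ∑' n, P t n := tsum_nonneg fun n => ENNReal.toReal_nonneg
    linarith
  refine ⟨?_, ?_⟩
  · intro t
    rcases le_or_gt 0 t with ht | ht
    · rw [hUeq t ht]; exact ENNReal.ofReal_lt_top
    · rw [hU, Icc_eq_empty (by linarith)]; simp
  have hUupper : ∀ t, 0 ≤ t → (U t).toReal * (1 - F t) ≤ ((1 - F (b*t)) / (1 - F t))⁻¹ := by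
    intro t ht
    have h1 : (U t).toReal ≤ 1 / (1 - F (b*t)) := by
      rw [hUr t ht]
      have := (hPs t ht).tsum_le_tsum (hPup t ht) (hgeo _).summable
      rw [(hgeo _).tsum_eq] at this
      linarith
    calc _ ≤ 1 / (1 - F (b*t)) * (1 - F t) := mul_le_mul_of_nonneg_right h1 (hFtail t).le
      _ = _ := by rw [inv_div]; ring
  -- truncated moments
  set M : ℝ → ℝ := fun T => (∫⁻ x in Iic T, ENNReal.ofReal x ∂μ).toReal with hMdef
  have hMle : ∀ T, ∫⁻ x in Iic T, ENNReal.ofReal x ∂μ ≤ ENNReal.ofReal T := by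
    intro T
    calc _ ≤ ∫⁻ x in Iic T, ENNReal.ofReal T ∂μ :=
          setLIntegral_mono (by fun_prop) fun x hx => ENNReal.ofReal_le_ofReal hx
      _ = ENNReal.ofReal T * μ (Iic T) := by simp
      _ ≤ ENNReal.ofReal T * 1 := mul_le_mul' le_rfl prob_le_one
      _ = _ := mul_one _
  have hMtop : ∀ T, ∫⁻ x in Iic T, ENNReal.ofReal x ∂μ ≠ ⊤ := fun T =>
    ((hMle T).trans_lt ENNReal.ofReal_lt_top).ne
  have hMstep : ∀ T, 0 ≤ T → M T ≤ M (T/2) + T * (1 - F (T/2)) := by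
    intro T hT
    have hcompl : μ (Ioi (T/2)) = ENNReal.ofReal (1 - F (T/2)) := by
      rw [← compl_Iic, prob_compl_eq_one_sub measurableSet_Iic, hIic,
        ENNReal.ofReal_sub _ (hF0 _), ENNReal.ofReal_one]
    have : ∫⁻ x in Iic T, ENNReal.ofReal x ∂μ ≤
        ENNReal.ofReal (M (T/2) + T * (1 - F (T/2))) := by
      calc _ ≤ ∫⁻ x in Iic (T/2) ∪ Ioc (T/2) T, ENNReal.ofReal x ∂μ := by
            apply lintegral_mono_set
            intro x hx
            rcases le_or_gt x (T/2) with h | h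
            · exact Or.inl h
            · exact Or.inr ⟨h, hx⟩
        _ ≤ _ := lintegral_union_le _ _ _
        _ ≤ ENNReal.ofReal (M (T/2)) + ENNReal.ofReal T * ENNReal.ofReal (1 - F (T/2)) := by
            apply add_le_add
            · rw [ENNReal.ofReal_toReal (hMtop _)]
            · calc _ ≤ ∫⁻ x in Ioc (T/2) T, ENNReal.ofReal T ∂μ :=
                    setLIntegral_mono (by fun_prop) fun x hx => ENNReal.ofReal_le_ofReal hx.2
                _ = ENNReal.ofReal T * μ (Ioc (T/2) T) := by simp
                _ ≤ _ := by
                    rw [← hcompl]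
                    exact mul_le_mul' le_rfl (measure_mono fun x hx => hx.1)
        _ = _ := by
            rw [← ENNReal.ofReal_mul hT, ← ENNReal.ofReal_add ENNReal.toReal_nonneg
              (mul_nonneg hT (hFtail _).le)]
    exact ENNReal.toReal_le_of_le_ofReal
      (add_nonneg ENNReal.toReal_nonneg (mul_nonneg hT (hFtail _).le)) this
  obtain ⟨C, T0, hC, hT0, hCM⟩ := moment_bound M (fun t => 1 - F t) hFtail
    (fun s t h => sub_le_sub_left (hFmono h) 1)
    (fun T hT => ENNReal.toReal_le_of_le_ofReal hT (hMle T)) hMstep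
    (hFslow (1/2) (by norm_num))
  have hmom : ∀ c, ∀ i, ∫⁻ x in Iic c, ENNReal.ofReal x ∂(μs i) ≤
      ENNReal.ofReal (M (b * max c 0) / a) := by
    intro c i
    rw [hμs, setLIntegral_map measurableSet_Iic (by fun_prop) (hmeas i), hpre]
    calc _ ≤ ∫⁻ x in Iic (b * max c 0), ENNReal.ofReal x * ENNReal.ofReal (1/a) ∂μ := by
          refine (lintegral_mono_set ?_).trans (lintegral_mono ?_)
          · intro x hx
            refine le_trans (mem_Iic.1 hx) ?_
            calc lam i * c ≤ lam i * max c 0 :=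
                  mul_le_mul_of_nonneg_left (le_max_left _ _) (hlp i).le
              _ ≤ b * max c 0 := mul_le_mul_of_nonneg_right (hlam i).2 (le_max_right _ _)
          · intro x
            dsimp only
            rcases le_or_gt x 0 with h | h
            · rw [ENNReal.ofReal_of_nonpos (div_nonpos_of_nonpos_of_nonneg h (hlp i).le)]
              exact bot_le
            · rw [← ENNReal.ofReal_mul h.le]
              apply ENNReal.ofReal_le_ofReal
              rw [mul_one_div]
              exact div_le_div_of_nonneg_left h.le ha (hlam i).1
      _ = (∫⁻ x in Iic (b * max c 0), ENNReal.ofReal x ∂μ) * ENNReal.ofReal (1/a) :=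
          lintegral_mul_const _ (by fun_prop)
      _ = _ := by
          rw [← ENNReal.ofReal_toReal (hMtop (b * max c 0)),
            ← ENNReal.ofReal_mul ENNReal.toReal_nonneg, mul_one_div]
  -- lower bound
  have hlow : ∀ e t, 0 < e → 0 < t → T0 ≤ b * e * t →
      ((1 - F (a*e*t)) / (1 - F t))⁻¹ - C * b / a * e * ((1 - F (b*e*t)) / (1 - F t))⁻¹
        ≤ (U t).toReal * (1 - F t) := by
    intro e t he ht hT
    set c := e * t with hc
    have hc0 : 0 < c := mul_pos he ht
    set m := M (b * c) / a with hm
    have hm0 : 0 ≤ m := div_nonneg ENNReal.toReal_nonneg ha.le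
    have hmc : ∀ i, ∫⁻ x in Iic c, ENNReal.ofReal x ∂(μs i) ≤ ENNReal.ofReal m := by
      intro i
      have := hmom c i
      rwa [max_eq_left hc0.le] at this
    have h1 : ∀ n : ℕ, F (a*c) ^ (n+1) - ((n+1 : ℕ) : ℝ) * F (b*c) ^ n * (m / t) ≤ P t n := by
      intro n
      have h := pc_lower μs h0 c t ht _ _ _ (hIa c hc0.le) (hIb c hc0.le) hmc n
      have hnn : 0 ≤ ((n+1 : ℕ) : ℝ) * F (b*c) ^ n := mul_nonneg (Nat.cast_nonneg _)
        (pow_nonneg (hF0 _) _)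
      have hnn2 : 0 ≤ ((n+1 : ℕ) : ℝ) * F (b*c) ^ n * m / t :=
        div_nonneg (mul_nonneg hnn hm0) ht.le
      rw [← ENNReal.ofReal_pow (hF0 _), ← ENNReal.ofReal_pow (hF0 _), ← ENNReal.ofReal_natCast,
        ← ENNReal.ofReal_mul (Nat.cast_nonneg _), ← ENNReal.ofReal_mul hnn,
        ← ENNReal.ofReal_div_of_pos ht, ← ENNReal.ofReal_toReal (hne t (n+1)),
        ← ENNReal.ofReal_add ENNReal.toReal_nonneg hnn2,
        ENNReal.ofReal_le_ofReal_iff (add_nonneg ENNReal.toReal_nonneg hnn2)] at h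
      have : P t n = (partialConv μs (n+1) (Icc 0 t)).toReal := rfl
      rw [mul_div_assoc] at h
      linarith
    have hs := (hgeo (a*c)).sub ((hasSum_succ_geo _ (hF0 (b*c)) (hF1 _)).mul_right (m/t))
    have h2 := hs.summable.tsum_le_tsum h1 (hPs t ht.le)
    rw [hs.tsum_eq] at h2
    have h3 : 1 / (1 - F (a*c)) - 1 / (1 - F (b*c))^2 * (m/t) ≤ (U t).toReal := by
      rw [hUr t ht.le]; linarith
    have hbc := hFtail (b*c)
    have h4 : 1 / (1 - F (b*c))^2 * (m/t) ≤ C * b / a * e * (1 / (1 - F (b*c))) := by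
      have hMb := hCM (b*c) (by rw [hc, ← mul_assoc]; exact hT)
      calc 1 / (1 - F (b*c))^2 * (m/t)
          ≤ 1 / (1 - F (b*c))^2 * ((C * (b*c) * (1 - F (b*c))) / a / t) := by
            rw [hm]; gcongr
        _ = _ := by rw [hc] at hbc ⊢; field_simp
    have h5 : (1 / (1 - F (a*c)) - C * b / a * e * (1 / (1 - F (b*c)))) * (1 - F t)
        ≤ (U t).toReal * (1 - F t) :=
      mul_le_mul_of_nonneg_right (by linarith) (hFtail t).le
    refine le_trans (le_of_eq ?_) h5
    rw [inv_div, inv_div, mul_assoc a, mul_assoc b]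
    ring
  refine tendsto_order.2 ⟨?_, ?_⟩
  · intro x hx
    set K := C * b / a with hK
    have hKp : 0 < K := by positivity
    set e := (1 - x) / (2 * K) with he
    have hep : 0 < e := by have : 0 < 1 - x := by linarith
                           positivity
    have hlim : Tendsto (fun t => ((1 - F (a*e*t)) / (1 - F t))⁻¹ -
        K * e * ((1 - F (b*e*t)) / (1 - F t))⁻¹) atTop (𝓝 (1⁻¹ - K * e * 1⁻¹)) :=
      ((hFslow (a*e) (by positivity)).inv₀ one_ne_zero).sub
        (((hFslow (b*e) (by positivity)).inv₀ one_ne_zero).const_mul _)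
    have hlt : x < 1⁻¹ - K * e * 1⁻¹ := by
      have : K * e = (1 - x) / 2 := by rw [he]; field_simp
      rw [this]; norm_num; linarith
    filter_upwards [hlim.eventually (lt_mem_nhds hlt), eventually_gt_atTop 0,
      eventually_ge_atTop (T0 / (b*e))] with t h1 h2 h3
    refine h1.trans_le (hlow e t hep h2 ?_)
    rw [div_le_iff₀ (by positivity)] at h3
    linarith
  · intro x hx
    have hlim := (hFslow b hb).inv₀ one_ne_zero
    rw [inv_one] at hlim
    filter_upwards [hlim.eventually (gt_mem_nhds hx), eventually_ge_atTop 0] with t h1 h2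
    exact (hUupper t h2).trans_lt h1
end

section
/- Let μ be a probability measure on (0,∞) with distribution function F such that 1 − F is positive and slowly varying at infinity, let 0 < a < b < ∞, let (λ_i)_{i≥1} be any sequence in [a,b], let μ_i be the pushforward of μ under x ↦ x/λ_i, and let ν_Λ = δ_0 + Σ_{n=1}^∞ μ_1 * ⋯ * μ_n be the associated renewal measure with U_Λ(t) = ν_Λ([0,t]). Then for every z > 0, (∫_{[0,∞)} e^{−z·s/t} dν_Λ(s)) / U_Λ(t) → 1 as t → ∞; i.e., the normalized renewal measures B ↦ ν_Λ(t·B)/U_Λ(t) converge to the point mass at 0 in the sense of Laplace transforms. -/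
open MeasureTheory ProbabilityTheory Filter Set Topology ENNReal

lemma aux_trunc_step (μ : Measure ℝ) [IsProbabilityMeasure μ] (t : ℝ) (ht : 0 < t) :
    ∫ x in Ioc 0 (2*t), x ∂μ ≤ (∫ x in Ioc 0 t, x ∂μ)
      + 2 * t * (μ.real (Ioi t) - μ.real (Ioi (2*t))) := by
  have hint : ∀ s u : ℝ, IntegrableOn (fun x : ℝ => x) (Ioc s u) μ := fun s u =>
    (continuous_id.integrableOn_Icc (a := s) (b := u)).mono_set Ioc_subset_Icc_self
  have h1 : Ioc (0:ℝ) (2*t) = Ioc 0 t ∪ Ioc t (2*t) :=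
    (Ioc_union_Ioc_eq_Ioc ht.le (by linarith)).symm
  have hd : Disjoint (Ioc (0:ℝ) t) (Ioc t (2*t)) := by
    rw [Set.disjoint_left]; intro x hx hy; exact absurd hx.2 (not_le.2 hy.1)
  rw [h1, setIntegral_union hd measurableSet_Ioc (hint _ _) (hint _ _)]
  have h2 : ∫ x in Ioc t (2*t), x ∂μ ≤ ∫ x in Ioc t (2*t), (2*t) ∂μ :=
    setIntegral_mono_on (hint _ _) (integrableOn_const (by simp)) measurableSet_Ioc
      (fun x hx => hx.2)
  have h3 : μ.real (Ioi t) = μ.real (Ioc t (2*t)) + μ.real (Ioi (2*t)) := by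
    rw [← Ioc_union_Ioi_eq_Ioi (show t ≤ 2*t by linarith), measureReal_union _ measurableSet_Ioi]
    rw [Set.disjoint_left]; intro x hx hy; exact absurd hx.2 (not_le.2 hy)
  rw [setIntegral_const, smul_eq_mul] at h2
  rw [h3]
  linarith

lemma aux_trunc (μ : Measure ℝ) [IsProbabilityMeasure μ]
    (hpos : ∀ t : ℝ, 0 < μ.real (Ioi t))
    (hslow : Tendsto (fun t : ℝ => μ.real (Ioi (2 * t)) / μ.real (Ioi t)) atTop (𝓝 1)) :
    Tendsto (fun t : ℝ => (∫ x in Ioc 0 t, x ∂μ) / t / μ.real (Ioi t)) atTop (𝓝 0) := by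
  set M : ℝ → ℝ := fun t => ∫ x in Ioc 0 t, x ∂μ with hM
  have hM0 : ∀ t, 0 ≤ M t := fun t => setIntegral_nonneg measurableSet_Ioc (fun x hx => hx.1.le)
  have hMle : ∀ t, 0 < t → M t ≤ t := by
    intro t ht
    have h2 : M t ≤ ∫ x in Ioc 0 t, t ∂μ :=
      setIntegral_mono_on ((continuous_id.integrableOn_Icc).mono_set Ioc_subset_Icc_self)
        (integrableOn_const (by simp)) measurableSet_Ioc (fun x hx => hx.2)
    rw [setIntegral_const, smul_eq_mul] at h2
    nlinarith [measureReal_le_one (μ := μ) (s := Ioc 0 t)]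
  rw [Metric.tendsto_atTop]
  intro ε hε
  set δ : ℝ := min (1/2) (ε/8) with hδ
  have hδ0 : 0 < δ := by positivity
  have hδ1 : δ ≤ 1/2 := min_le_left _ _
  have hδ2 : δ ≤ ε/8 := min_le_right _ _
  have hs' := hslow.inv₀ one_ne_zero
  rw [inv_one] at hs'
  have hev := (hs'.eventually_lt_const (show (1:ℝ) < 1 + δ by linarith)).and (eventually_gt_atTop 0)
  obtain ⟨t0, ht0⟩ := eventually_atTop.1 hev
  have ht0p := (ht0 t0 le_rfl).2
  set C : ℝ := 1 / μ.real (Ioi (2*t0)) with hC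
  have hCp : 0 < C := by have := hpos (2*t0); positivity
  have key : ∀ n : ℕ, ∀ t, t0 ≤ t → t ≤ 2^(n+1) * t0 → (2:ℝ)^n * t0 ≤ t →
      M t / t / μ.real (Ioi t) ≤ (3/4)^n * C + 4*δ := by
    intro n
    induction n with
    | zero =>
      intro t h1 h2 _
      have htp : 0 < t := by linarith
      have : M t / t / μ.real (Ioi t) ≤ C := by
        have : μ.real (Ioi (2*t0)) ≤ μ.real (Ioi t) :=
          measureReal_mono (Ioi_subset_Ioi (by simpa using h2))
        have h5 : M t / t ≤ 1 := by rw [div_le_one htp]; exact hMle t htp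
        rw [hC]
        exact div_le_div₀ zero_le_one h5 (hpos _) this
      simp; linarith
    | succ n ih =>
      intro t h1 h2 h3
      set s := t/2 with hs
      have hts : t = 2*s := by rw [hs]; ring
      have hp : (1:ℝ) ≤ 2^n := one_le_pow₀ (by norm_num)
      have hs3 : (2:ℝ)^n * t0 ≤ s := by rw [pow_succ] at h3; linarith
      have hs2 : s ≤ (2:ℝ)^(n+1) * t0 := by rw [pow_succ] at h2; linarith
      have hs1 : t0 ≤ s := by nlinarith
      have ih' := ih s hs1 hs2 hs3
      have hsp : 0 < s := by linarith
      have hq := (ht0 s hs1).1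
      rw [inv_div] at hq
      have hstep := aux_trunc_step μ s hsp
      have hG1 := hpos s
      have hG2 := hpos (2*s)
      rw [hts]
      set q := μ.real (Ioi s) / μ.real (Ioi (2*s)) with hqd
      have e1 : M (2*s) / (2*s) / μ.real (Ioi (2*s)) ≤ (q/2) * (M s / s / μ.real (Ioi s)) + (q - 1) := by
        have : (q/2) * (M s / s / μ.real (Ioi s)) + (q - 1)
          = (M s + 2 * s * (μ.real (Ioi s) - μ.real (Ioi (2*s)))) / (2*s) / μ.real (Ioi (2*s)) := by
          rw [hqd]; field_simp
        rw [this]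
        gcongr
      have hr0 : 0 ≤ M s / s / μ.real (Ioi s) := by have := hM0 s; positivity
      have e2 : (q/2) * (M s / s / μ.real (Ioi s)) ≤ (3/4) * (M s / s / μ.real (Ioi s)) := by
        exact mul_le_mul_of_nonneg_right (by linarith) hr0
      rw [pow_succ]
      linarith
  obtain ⟨N, hN⟩ := exists_pow_lt_of_lt_one (show 0 < ε/2/C by positivity) (show (3/4:ℝ) < 1 by norm_num)
  refine ⟨2^N * t0, fun t ht => ?_⟩
  have hp : (1:ℝ) ≤ 2^N := one_le_pow₀ (by norm_num)
  have htt0 : t0 ≤ t := by nlinarith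
  have hx : 1 ≤ t / t0 := by rw [le_div_iff₀ ht0p]; linarith
  obtain ⟨n, hn1, hn2⟩ := exists_nat_pow_near hx (show (1:ℝ) < 2 by norm_num)
  rw [le_div_iff₀ ht0p] at hn1
  rw [div_lt_iff₀ ht0p] at hn2
  have hNn : N ≤ n := by
    by_contra hlt
    have : (2:ℝ)^(n+1) ≤ 2^N := pow_le_pow_right₀ (by norm_num) (by omega)
    nlinarith
  have := key n t htt0 hn2.le hn1
  have h4 : (3/4:ℝ)^n ≤ (3/4)^N := pow_le_pow_of_le_one (by norm_num) (by norm_num) hNn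
  rw [lt_div_iff₀ hCp] at hN
  have h0 : 0 ≤ M t / t / μ.real (Ioi t) := by
    have := hM0 t; have := hpos t; have : 0 < t := by linarith
    positivity
  rw [Real.dist_eq, sub_zero, abs_of_nonneg h0]
  nlinarith

lemma aux_laplace (μ : Measure ℝ) [IsProbabilityMeasure μ] (hsupp : ∀ᵐ x ∂μ, 0 < x)
    (hpos : ∀ t : ℝ, 0 < μ.real (Ioi t))
    (hslow : ∀ c : ℝ, 0 < c →
      Tendsto (fun t : ℝ => μ.real (Ioi (c * t)) / μ.real (Ioi t)) atTop (𝓝 1))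
    (z : ℝ) (hz : 0 < z) :
    Tendsto (fun t : ℝ => (1 - ∫ x, Real.exp (-(z/t) * x) ∂μ) / μ.real (Ioi t)) atTop (𝓝 1) := by
  have hint : ∀ t : ℝ, 0 < t → Integrable (fun x => Real.exp (-(z/t) * x)) μ := by
    intro t ht
    refine Integrable.of_bound (by fun_prop) 1 ?_
    filter_upwards [hsupp] with x hx
    rw [Real.norm_eq_abs, abs_of_pos (Real.exp_pos _), Real.exp_le_one_iff]
    have : 0 < z/t*x := by positivity
    linarith
  have hH : ∀ t : ℝ, 0 < t → 1 - ∫ x, Real.exp (-(z/t) * x) ∂μ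
      = ∫ x, (1 - Real.exp (-(z/t) * x)) ∂μ := by
    intro t ht
    rw [integral_sub (integrable_const _) (hint t ht)]; simp
  have hintH : ∀ t : ℝ, 0 < t → Integrable (fun x => 1 - Real.exp (-(z/t) * x)) μ :=
    fun t ht => (integrable_const _).sub (hint t ht)
  have hup : ∀ t : ℝ, 0 < t → (1 - ∫ x, Real.exp (-(z/t) * x) ∂μ) / μ.real (Ioi t)
      ≤ 1 + z * ((∫ x in Ioc 0 t, x ∂μ) / t / μ.real (Ioi t)) := by
    intro t ht
    have hG := hpos t
    have hi1 : Integrable ((Ioi t).indicator (fun _ => (1:ℝ))) μ :=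
      (integrable_const _).indicator measurableSet_Ioi
    have hi2 : Integrable ((Ioc 0 t).indicator (fun x => z/t*x)) μ := by
      rw [integrable_indicator_iff measurableSet_Ioc]
      exact (Continuous.integrableOn_Icc (by fun_prop)).mono_set Ioc_subset_Icc_self
    have h : 1 - ∫ x, Real.exp (-(z/t) * x) ∂μ ≤
        μ.real (Ioi t) + z/t * ∫ x in Ioc 0 t, x ∂μ := by
      rw [hH t ht]
      have : μ.real (Ioi t) + z/t * ∫ x in Ioc 0 t, x ∂μ =
        ∫ x, ((Ioi t).indicator (fun _ => (1:ℝ)) x + (Ioc 0 t).indicator (fun x => z/t*x) x) ∂μ := by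
        rw [integral_add hi1 hi2, integral_indicator measurableSet_Ioi,
          integral_indicator measurableSet_Ioc, integral_const_mul]
        simp
      rw [this]
      refine integral_mono_ae (hintH t ht) (hi1.add hi2) ?_
      filter_upwards [hsupp] with x hx
      by_cases hxt : x ≤ t
      · have : x ∈ Ioc 0 t := ⟨hx, hxt⟩
        have h2 : x ∉ Ioi t := by simpa using hxt
        simp only [indicator_of_mem this, indicator_of_notMem h2]
        have := Real.add_one_le_exp (-(z/t) * x)
        linarith
      · have : x ∉ Ioc 0 t := fun h => hxt h.2
        have h2 : x ∈ Ioi t := by simpa using hxt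
        simp only [indicator_of_mem h2, indicator_of_notMem this]
        have := Real.exp_pos (-(z/t) * x)
        linarith
    rw [div_le_iff₀ hG]
    refine h.trans (le_of_eq ?_)
    field_simp
  have hlow : ∀ K : ℝ, 0 < K → ∀ t : ℝ, 0 < t →
      (1 - Real.exp (-(z*K))) * (μ.real (Ioi (K*t)) / μ.real (Ioi t)) ≤
      (1 - ∫ x, Real.exp (-(z/t) * x) ∂μ) / μ.real (Ioi t) := by
    intro K hK t ht
    have hG := hpos t
    rw [← mul_div_assoc]
    gcongr
    rw [hH t ht]
    have : (1 - Real.exp (-(z*K))) * μ.real (Ioi (K*t)) =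
      ∫ x, (Ioi (K*t)).indicator (fun _ => (1 - Real.exp (-(z*K)))) x ∂μ := by
      rw [integral_indicator measurableSet_Ioi]
      simp [mul_comm]
    rw [this]
    refine integral_mono_ae ((integrable_const _).indicator measurableSet_Ioi) (hintH t ht) ?_
    filter_upwards [hsupp] with x hx
    by_cases hxt : x ∈ Ioi (K*t)
    · simp only [indicator_of_mem hxt]
      have h1 : K * t < x := hxt
      have h2 : z * K ≤ z/t*x := by
        have : z*K = z/t*(K*t) := by field_simp
        rw [this]; gcongr
      have : Real.exp (-(z/t) * x) ≤ Real.exp (-(z*K)) := Real.exp_le_exp.2 (by linarith)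
      linarith
    · simp only [indicator_of_notMem hxt]
      have : Real.exp (-(z/t) * x) ≤ 1 := by
        rw [Real.exp_le_one_iff]
        have : 0 < z/t*x := by positivity
        linarith
      linarith
  have htr := aux_trunc μ hpos (hslow 2 two_pos)
  rw [tendsto_order]
  constructor
  · intro c hc
    have hE : Tendsto (fun K : ℝ => 1 - Real.exp (-(z*K))) atTop (𝓝 (1 - 0)) := by
      refine tendsto_const_nhds.sub ?_
      exact Real.tendsto_exp_neg_atTop_nhds_zero.comp (tendsto_id.const_mul_atTop hz)
    rw [sub_zero] at hE
    obtain ⟨K, hK1, hK2⟩ := ((hE.eventually_const_lt hc).and (eventually_gt_atTop 0)).exists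
    have := (hslow K hK2).const_mul (1 - Real.exp (-(z*K)))
    rw [mul_one] at this
    filter_upwards [this.eventually_const_lt hK1, eventually_gt_atTop 0] with t h1 h2
    exact h1.trans_le (hlow K hK2 t h2)
  · intro c hc
    have := (htr.const_mul z).const_add 1
    rw [mul_zero, add_zero] at this
    filter_upwards [this.eventually_lt_const hc, eventually_gt_atTop 0] with t h1 h2
    exact (hup t h2).trans_lt h1

lemma aux_squeeze (u : ℝ → ℝ) (l : ℝ → ℝ → ℝ)
    (hl : ∀ z, 0 < z → Tendsto (l z) atTop (𝓝 1))
    (h1 : ∀ z, 0 < z → ∀ᶠ t in atTop, l z t ≤ u t + Real.exp (-(z/2)) * l (z/2) t)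
    (h2 : ∀ z, 0 < z → ∀ᶠ t in atTop, u t ≤ Real.exp z * l z t) :
    Tendsto u atTop (𝓝 1) := by
  rw [tendsto_order]
  constructor
  · intro c hc
    have hE : Tendsto (fun z : ℝ => 1 - Real.exp (-(z/2)) * 1) atTop (𝓝 (1 - 0 * 1)) := by
      refine tendsto_const_nhds.sub (Tendsto.mul_const _ ?_)
      exact Real.tendsto_exp_neg_atTop_nhds_zero.comp (tendsto_id.atTop_div_const two_pos)
    rw [zero_mul, sub_zero] at hE
    obtain ⟨z, hz1, hz2⟩ := ((hE.eventually_const_lt hc).and (eventually_gt_atTop 0)).exists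
    have := (hl z hz2).sub ((hl (z/2) (by positivity)).const_mul (Real.exp (-(z/2))))
    filter_upwards [this.eventually_const_lt hz1, h1 z hz2] with t h3 h4
    linarith
  · intro c hc
    have hE : Tendsto (fun z : ℝ => Real.exp z * 1) (𝓝[>] 0) (𝓝 (Real.exp 0 * 1)) :=
      ((by fun_prop : Continuous (fun z : ℝ => Real.exp z * 1)).tendsto 0).mono_left nhdsWithin_le_nhds
    rw [Real.exp_zero, mul_one] at hE
    obtain ⟨z, hz1, hz2⟩ := ((hE.eventually_lt_const hc).and self_mem_nhdsWithin).exists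
    have := (hl z hz2).const_mul (Real.exp z)
    filter_upwards [this.eventually_lt_const hz1, h2 z hz2] with t h3 h4
    linarith

lemma aux_conv_nonneg (μs : ℕ → Measure ℝ) [∀ i, IsProbabilityMeasure (μs i)]
    (h : ∀ i, ∀ᵐ x ∂(μs i), 0 ≤ x) (n : ℕ) :
    IsProbabilityMeasure (partialConv μs n) ∧ ∀ᵐ x ∂(partialConv μs n), 0 ≤ x := by
  induction n with
  | zero =>
    refine ⟨by unfold partialConv; infer_instance, ?_⟩
    simp only [partialConv]
    rw [ae_dirac_iff measurableSet_Ici]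
  | succ n ih =>
    obtain ⟨ih1, ih2⟩ := ih
    refine ⟨by unfold partialConv; infer_instance, ?_⟩
    simp only [partialConv, Measure.conv]
    rw [ae_map_iff (by fun_prop) measurableSet_Ici]
    filter_upwards [Measure.quasiMeasurePreserving_fst.ae ih2,
      Measure.quasiMeasurePreserving_snd.ae (h (n+1))] with p h1 h2
    exact add_nonneg h1 h2

lemma aux_conv_laplace (μs : ℕ → Measure ℝ) [∀ i, IsProbabilityMeasure (μs i)]
    (h : ∀ i, ∀ᵐ x ∂(μs i), 0 ≤ x) (w : ℝ) (p q : ℝ≥0∞)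
    (hp : ∀ i, p ≤ ∫⁻ x, ENNReal.ofReal (Real.exp (w * x)) ∂(μs i))
    (hq : ∀ i, ∫⁻ x, ENNReal.ofReal (Real.exp (w * x)) ∂(μs i) ≤ q) (n : ℕ) :
    p ^ n ≤ ∫⁻ x, ENNReal.ofReal (Real.exp (w * x)) ∂(partialConv μs n) ∧
    ∫⁻ x, ENNReal.ofReal (Real.exp (w * x)) ∂(partialConv μs n) ≤ q ^ n := by
  induction n with
  | zero => simp [partialConv]
  | succ n ih =>
    have := (aux_conv_nonneg μs h n).1
    have key : ∫⁻ x, ENNReal.ofReal (Real.exp (w * x)) ∂(partialConv μs (n+1)) =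
      (∫⁻ x, ENNReal.ofReal (Real.exp (w * x)) ∂(partialConv μs n)) *
      ∫⁻ x, ENNReal.ofReal (Real.exp (w * x)) ∂(μs (n+1)) := by
      simp only [partialConv]
      rw [Measure.conv, lintegral_map (by fun_prop) (by fun_prop), ← lintegral_prod_mul (by fun_prop) (by fun_prop)]
      congr 1
      ext x
      rw [mul_add, Real.exp_add, ENNReal.ofReal_mul (Real.exp_pos _).le]
    rw [key, pow_succ, pow_succ]
    exact ⟨mul_le_mul' ih.1 (hp _), mul_le_mul' ih.2 (hq _)⟩

/-- **Normalized renewal measures concentrate at `0`.** For the renewal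
measure `ν_Λ = δ_0 + Σ_{n≥1} μ_1 * ⋯ * μ_n` of a scaled renewal process whose
common waiting-time tail `1 - F` is positive and slowly varying, one has, for
every `z > 0`, `(∫_{[0,∞)} e^{-z·s/t} dν_Λ(s)) / U_Λ(t) → 1` as `t → ∞`,
i.e. the normalized measures `B ↦ ν_Λ(t·B)/U_Λ(t)` converge to the point mass
at `0` in the sense of Laplace transforms. -/
theorem normalized_renewal_measure_tendsto_dirac
    (μ : Measure ℝ) [IsProbabilityMeasure μ]
    (hsupp : μ (Set.Iic (0 : ℝ)) = 0)
    (F : ℝ → ℝ) (hF : ∀ t, F t = (μ (Set.Ioc (0 : ℝ) t)).toReal)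
    (hFtail : ∀ t : ℝ, 0 < 1 - F t)
    (hFslow : ∀ c : ℝ, 0 < c →
      Tendsto (fun t : ℝ => (1 - F (c * t)) / (1 - F t)) atTop (𝓝 1))
    (a b : ℝ) (ha : 0 < a) (hab : a < b)
    (lam : ℕ → ℝ) (hlam : ∀ i, lam i ∈ Set.Icc a b)
    (μs : ℕ → Measure ℝ)
    (hμs : ∀ i, μs i = Measure.map (fun x : ℝ => x / lam i) μ)
    (ν : Measure ℝ)
    (hν : ν = Measure.dirac 0 + Measure.sum (fun n : ℕ => partialConv μs (n + 1)))
    (U : ℝ → ℝ≥0∞) (hU : ∀ t, U t = ν (Set.Icc 0 t)) :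
    ∀ z : ℝ, 0 < z →
      Tendsto (fun t : ℝ =>
          (∫⁻ s in Set.Ici (0 : ℝ), ENNReal.ofReal (Real.exp (-z * s / t)) ∂ν) / U t)
        atTop (𝓝 1) := by
  have hae : ∀ᵐ x ∂μ, 0 < x := by
    rw [ae_iff]; simpa [Set.Iic] using hsupp
  have hG : ∀ t, 1 - F t = μ.real (Ioi t) := by
    intro t
    have h1 : μ (Ioc 0 t) = μ (Iic t) := by
      refine measure_congr ?_
      filter_upwards [hae] with x hx
      exact propext ⟨fun h => h.2, fun h => ⟨hx, h⟩⟩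
    rw [hF, h1, ← measureReal_def, ← compl_Iic, probReal_compl_eq_one_sub measurableSet_Iic]
  simp only [hG] at hFtail hFslow
  have hlp : ∀ i, 0 < lam i := fun i => ha.trans_le (hlam i).1
  have hbp : 0 < b := ha.trans hab
  have hprob : ∀ i, IsProbabilityMeasure (μs i) := by
    intro i; rw [hμs i]; exact Measure.isProbabilityMeasure_map (by fun_prop)
  have hnn : ∀ i, ∀ᵐ x ∂(μs i), 0 ≤ x := by
    intro i
    rw [hμs i, ae_map_iff (by fun_prop) measurableSet_Ici]
    filter_upwards [hae] with x hx
    exact (div_pos hx (hlp i)).le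
  have hν' : ν = Measure.sum (fun n => partialConv μs n) := by
    rw [hν]
    ext s hs
    rw [Measure.add_apply, Measure.sum_apply _ hs, Measure.sum_apply _ hs,
      tsum_eq_zero_add' (f := fun n => partialConv μs n s) ENNReal.summable]
    rfl
  have hνnn : ∀ᵐ x ∂ν, 0 ≤ x := by
    rw [hν', Measure.ae_sum_iff' measurableSet_Ici]
    exact fun n => (aux_conv_nonneg μs hnn n).2
  have hres : ν.restrict (Ici 0) = ν := Measure.restrict_eq_self_of_ae_mem hνnn
  rw [hres]
  set L : ℝ → ℝ → ℝ≥0∞ := fun z t => ∫⁻ s, ENNReal.ofReal (Real.exp (-z * s / t)) ∂ν with hL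
  set g : ℝ → ℝ≥0∞ := fun t => ENNReal.ofReal (μ.real (Ioi t)) with hg
  set φ : ℝ → ℝ := fun w => ∫ x, Real.exp (-w * x) ∂μ with hφ
  have hint : ∀ w, 0 < w → Integrable (fun x => Real.exp (-w * x)) μ := by
    intro w hw
    refine Integrable.of_bound (by fun_prop) 1 ?_
    filter_upwards [hae] with x hx
    rw [Real.norm_eq_abs, abs_of_pos (Real.exp_pos _), Real.exp_le_one_iff]
    have : 0 < w*x := by positivity
    linarith
  have hφE : ∀ w, 0 < w → ∫⁻ x, ENNReal.ofReal (Real.exp (-w * x)) ∂μ = ENNReal.ofReal (φ w) := by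
    intro w hw
    rw [hφ, ofReal_integral_eq_lintegral_ofReal (hint w hw) (ae_of_all _ fun x => (Real.exp_pos _).le)]
  have hφanti : ∀ w v, 0 < w → w ≤ v → φ v ≤ φ w := by
    intro w v hw hv
    refine integral_mono_ae (hint v (hw.trans_le hv)) (hint w hw) ?_
    filter_upwards [hae] with x hx
    apply Real.exp_le_exp.2
    nlinarith
  have hμsL : ∀ i w, 0 < w → ∫⁻ x, ENNReal.ofReal (Real.exp (-w * x)) ∂(μs i)
      = ENNReal.ofReal (φ (w / lam i)) := by
    intro i w hw
    rw [← hφE _ (div_pos hw (hlp i)), hμs i, lintegral_map (by fun_prop) (by fun_prop)]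
    congr 1; ext x; congr 2; ring
  have hLb : ∀ z t, 0 < z → 0 < t →
      (ENNReal.ofReal (1 - φ (z/a/t)))⁻¹ ≤ L z t ∧ L z t ≤ (ENNReal.ofReal (1 - φ (z/b/t)))⁻¹ := by
    intro z t hz ht
    have hw : 0 < z/t := by positivity
    have hLs : L z t = ∑' n, ∫⁻ x, ENNReal.ofReal (Real.exp (-(z/t) * x)) ∂(partialConv μs n) := by
      rw [hL]
      simp only
      rw [hν', lintegral_sum_measure]
      congr 1; ext n; congr 1; ext x; congr 2; ring
    have hb' := aux_conv_laplace μs hnn (-(z/t)) (ENNReal.ofReal (φ (z/a/t)))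
      (ENNReal.ofReal (φ (z/b/t)))
      (fun i => by
        rw [hμsL i _ hw]
        apply ENNReal.ofReal_le_ofReal
        apply hφanti _ _ (div_pos hw (hlp i))
        rw [div_right_comm]
        have := (hlam i).1
        gcongr)
      (fun i => by
        rw [hμsL i _ hw]
        apply ENNReal.ofReal_le_ofReal
        apply hφanti _ _ (by positivity)
        rw [div_right_comm]
        have := (hlam i).2
        have := hlp i
        gcongr)
    have hφ0 : ∀ w, 0 ≤ φ w := fun w => integral_nonneg fun x => (Real.exp_pos _).le
    rw [ENNReal.ofReal_sub _ (hφ0 _), ENNReal.ofReal_sub _ (hφ0 _), ENNReal.ofReal_one,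
      ← ENNReal.tsum_geometric, ← ENNReal.tsum_geometric, hLs]
    exact ⟨ENNReal.tsum_le_tsum fun n => (hb' n).1, ENNReal.tsum_le_tsum fun n => (hb' n).2⟩
  have hinv : ∀ z, 0 < z → Tendsto (fun t => g t * (ENNReal.ofReal (1 - φ (z/t)))⁻¹) atTop (𝓝 1) := by
    intro z hz
    have h0 := aux_laplace μ hae hFtail hFslow z hz
    have h1 := h0.inv₀ one_ne_zero
    rw [inv_one] at h1
    have h2 := ENNReal.tendsto_ofReal h1
    rw [ENNReal.ofReal_one] at h2
    refine h2.congr' ?_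
    filter_upwards [h0.eventually_const_lt zero_lt_one] with t ht
    have hp : 0 < 1 - φ (z/t) := by
      have := (div_pos_iff_of_pos_right (hFtail t)).1 ht
      exact this
    rw [inv_div, ENNReal.ofReal_div_of_pos hp, div_eq_mul_inv]
  have hgL : ∀ z, 0 < z → Tendsto (fun t => g t * L z t) atTop (𝓝 1) := by
    intro z hz
    refine tendsto_of_tendsto_of_tendsto_of_le_of_le' (hinv (z/a) (by positivity))
      (hinv (z/b) (by positivity)) ?_ ?_
    · filter_upwards [eventually_gt_atTop 0] with t ht
      exact mul_le_mul_right (hLb z t hz ht).1 _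
    · filter_upwards [eventually_gt_atTop 0] with t ht
      exact mul_le_mul_right (hLb z t hz ht).2 _
  have hUup : ∀ z t, 0 < z → 0 < t → U t ≤ ENNReal.ofReal (Real.exp z) * L z t := by
    intro z t hz ht
    rw [hU, hL]
    simp only
    rw [← lintegral_const_mul _ (by fun_prop), ← lintegral_indicator_one measurableSet_Icc]
    refine lintegral_mono fun s => ?_
    by_cases hs : s ∈ Icc 0 t
    · rw [indicator_of_mem hs, ← ENNReal.ofReal_mul (Real.exp_pos _).le, ← Real.exp_add]
      simp only [Pi.one_apply]
      rw [ENNReal.one_le_ofReal, Real.one_le_exp_iff]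
      have : z * s / t ≤ z := by
        rw [div_le_iff₀ ht]; exact mul_le_mul_of_nonneg_left hs.2 hz.le
      rw [neg_mul, neg_div]; linarith
    · rw [indicator_of_notMem hs]; exact zero_le
  have hUlow : ∀ z t, 0 < z → 0 < t →
      L z t ≤ U t + ENNReal.ofReal (Real.exp (-(z/2))) * L (z/2) t := by
    intro z t hz ht
    rw [hU, hL]
    simp only
    rw [← lintegral_const_mul _ (by fun_prop), ← lintegral_indicator_one measurableSet_Icc,
      ← lintegral_add_left (by exact measurable_one.indicator measurableSet_Icc)]
    refine lintegral_mono_ae ?_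
    filter_upwards [hνnn] with s hs0
    by_cases hs : s ∈ Icc 0 t
    · rw [indicator_of_mem hs]
      refine le_trans ?_ le_self_add
      simp only [Pi.one_apply]
      rw [ENNReal.ofReal_le_one, Real.exp_le_one_iff, neg_mul, neg_div]
      have : 0 ≤ z * s / t := by positivity
      linarith
    · rw [indicator_of_notMem hs, zero_add, ← ENNReal.ofReal_mul (Real.exp_pos _).le, ← Real.exp_add]
      have hst : t ≤ s := by
        by_contra h
        exact hs ⟨hs0, (not_le.1 h).le⟩
      apply ENNReal.ofReal_le_ofReal
      apply Real.exp_le_exp.2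
      have h1 : z/2 ≤ z/2 * s / t := by
        rw [le_div_iff₀ ht]; exact mul_le_mul_of_nonneg_left hst (by positivity)
      have h2 : -z * s / t = -(z/2*s/t) + -(z/2) * s/t := by ring
      rw [h2]; linarith
  have hgU : Tendsto (fun t => g t * U t) atTop (𝓝 1) := by
    have hLfin : ∀ z, 0 < z → ∀ᶠ t in atTop, g t * L z t < ⊤ := fun z hz =>
      (hgL z hz).eventually_lt_const ENNReal.one_lt_top
    have hupg : ∀ z t, 0 < z → 0 < t → g t * U t ≤ ENNReal.ofReal (Real.exp z) * (g t * L z t) := by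
      intro z t hz ht
      rw [mul_left_comm]; exact mul_le_mul_right (hUup z t hz ht) _
    have hlowg : ∀ z t, 0 < z → 0 < t →
        g t * L z t ≤ g t * U t + ENNReal.ofReal (Real.exp (-(z/2))) * (g t * L (z/2) t) := by
      intro z t hz ht
      rw [mul_left_comm, ← mul_add]; exact mul_le_mul_right (hUlow z t hz ht) _
    have hUfin : ∀ᶠ t in atTop, g t * U t < ⊤ := by
      filter_upwards [hLfin 1 one_pos, eventually_gt_atTop 0] with t h1 h2
      exact (hupg 1 t one_pos h2).trans_lt (ENNReal.mul_lt_top ENNReal.ofReal_lt_top h1)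
    have := aux_squeeze (fun t => (g t * U t).toReal) (fun (z t : ℝ) => (g t * L z t).toReal)
      (fun z hz => by
        have := (ENNReal.tendsto_toReal ENNReal.one_ne_top).comp (hgL z hz)
        rw [ENNReal.toReal_one] at this
        exact this)
      (fun z hz => by
        filter_upwards [hUfin, hLfin (z/2) (by positivity), eventually_gt_atTop 0] with t h1 h2 h3
        have h4 := ENNReal.mul_lt_top (ENNReal.ofReal_lt_top (r := Real.exp (-(z/2)))) h2
        have := ENNReal.toReal_mono (ENNReal.add_lt_top.2 ⟨h1, h4⟩).ne (hlowg z t hz h3)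
        rw [ENNReal.toReal_add h1.ne h4.ne, ENNReal.toReal_mul (a := ENNReal.ofReal (Real.exp _)),
          ENNReal.toReal_ofReal (Real.exp_pos _).le] at this
        exact this)
      (fun z hz => by
        filter_upwards [hLfin z hz, eventually_gt_atTop 0] with t h2 h3
        have h4 := ENNReal.mul_lt_top (ENNReal.ofReal_lt_top (r := Real.exp z)) h2
        have := ENNReal.toReal_mono h4.ne (hupg z t hz h3)
        rw [ENNReal.toReal_mul (a := ENNReal.ofReal (Real.exp _)),
          ENNReal.toReal_ofReal (Real.exp_pos _).le] at this
        exact this)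
    have h5 := ENNReal.tendsto_ofReal this
    rw [ENNReal.ofReal_one] at h5
    refine h5.congr' ?_
    filter_upwards [hUfin] with t ht
    exact ENNReal.ofReal_toReal ht.ne
  intro z hz
  have := ENNReal.Tendsto.div (hgL z hz) (Or.inl one_ne_zero) hgU (Or.inl ENNReal.one_ne_top)
  rw [div_one] at this
  refine this.congr fun t => ?_
  exact ENNReal.mul_div_mul_left _ _ (ENNReal.ofReal_pos.2 (hFtail t)).ne' ENNReal.ofReal_ne_top
end
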